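/- arXiv:2111.14728 — 2 statements merged into one kernel-verified Lean document; each statement's English description precedes it below -/
import Mathlib

section
/- Let $U$ be a finite-dimensional real inner product space, $f : U \to \mathbb{R} \cup \{+\infty\}$ a proper convex function, $\alpha > 0$, and $w \in U$. Suppose $w^+ \in U$ minimizes $v \mapsto \alpha f(v) + \tfrac{1}{2}\|v - w\|^2$ over $U$. Then for every $z \in U$ with $f(z) < \infty$, $\|w^+ - z\|^2 \le \|w - z\|^2 - 2\alpha\,(f(w^+) - f(z)) - \|w^+ - w\|^2$; in particular $\|w^+ - z\|^2 \le \|w - z\|^2 - 2\alpha\,(f(w^+) - f(z))$. -/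
/-- The fundamental per-iteration inequality for the proximal update: if `wplus`
minimizes `v ↦ α f v + ‖v - w‖²/2` for a proper convex function
`f : U → ℝ ∪ {+∞}`, then for every `z` with `f z < ∞`,
`‖wplus - z‖² ≤ ‖w - z‖² - 2α (f wplus - f z) - ‖wplus - w‖²`, and in particular
`‖wplus - z‖² ≤ ‖w - z‖² - 2α (f wplus - f z)`. -/
theorem prox_step_fejer_inequality
    {U : Type*} [NormedAddCommGroup U] [InnerProductSpace ℝ U] [FiniteDimensional ℝ U]
    (f : U → EReal) (hne_bot : ∀ v, f v ≠ ⊥) (hproper : ∃ v, f v ≠ ⊤)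
    (hconv : ∀ x y : U, ∀ a b : ℝ, 0 ≤ a → 0 ≤ b → a + b = 1 →
      f (a • x + b • y) ≤ (a : EReal) * f x + (b : EReal) * f y)
    (α : ℝ) (hα : 0 < α) (w wplus : U)
    (hmin : ∀ v : U, (α : EReal) * f wplus + ((‖wplus - w‖ ^ 2 / 2 : ℝ) : EReal)
      ≤ (α : EReal) * f v + ((‖v - w‖ ^ 2 / 2 : ℝ) : EReal)) :
    ∀ z : U, f z < ⊤ →
      ((‖wplus - z‖ ^ 2 : ℝ) : EReal)
          ≤ ((‖w - z‖ ^ 2 : ℝ) : EReal) - ((2 * α : ℝ) : EReal) * (f wplus - f z)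
            - ((‖wplus - w‖ ^ 2 : ℝ) : EReal) ∧
      ((‖wplus - z‖ ^ 2 : ℝ) : EReal)
          ≤ ((‖w - z‖ ^ 2 : ℝ) : EReal) - ((2 * α : ℝ) : EReal) * (f wplus - f z) := by
  intro z hz
  obtain ⟨q, hq⟩ : ∃ q : ℝ, f z = (q : EReal) :=
    ⟨(f z).toReal, (EReal.coe_toReal hz.ne (hne_bot z)).symm⟩
  have hpt : f wplus ≠ ⊤ := by
    intro h
    have h1 := hmin z
    rw [h, hq, EReal.coe_mul_top_of_pos hα, EReal.top_add_coe, top_le_iff] at h1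
    rw [← EReal.coe_mul, ← EReal.coe_add] at h1
    exact EReal.coe_ne_top _ h1
  obtain ⟨p, hp⟩ : ∃ p : ℝ, f wplus = (p : EReal) :=
    ⟨(f wplus).toReal, (EReal.coe_toReal hpt (hne_bot wplus)).symm⟩
  have key : ∀ t : ℝ, 0 < t → t ≤ 1 →
      α * (p - q) ≤ inner ℝ (wplus - w) (z - wplus) + t * (‖z - wplus‖ ^ 2 / 2) := by
    intro t ht ht1
    have hc := hconv wplus z (1 - t) t (by linarith) ht.le (by ring)
    have hm := hmin ((1 - t) • wplus + t • z)
    rw [hp, hq, ← EReal.coe_mul, ← EReal.coe_mul, ← EReal.coe_add] at hc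
    have hvt : f ((1 - t) • wplus + t • z) ≠ ⊤ := by
      intro h
      rw [h, top_le_iff] at hc
      exact EReal.coe_ne_top _ hc
    obtain ⟨r, hr⟩ : ∃ r : ℝ, f ((1 - t) • wplus + t • z) = (r : EReal) :=
      ⟨_, (EReal.coe_toReal hvt (hne_bot _)).symm⟩
    rw [hr] at hc hm
    rw [hp, ← EReal.coe_mul, ← EReal.coe_mul, ← EReal.coe_add, ← EReal.coe_add] at hm
    have hc' := EReal.coe_le_coe_iff.1 hc
    have hm' := EReal.coe_le_coe_iff.1 hm
    have hv : (1 - t) • wplus + t • z - w = (wplus - w) + t • (z - wplus) := by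
      module
    rw [hv, norm_add_sq_real, inner_smul_right, norm_smul, mul_pow, Real.norm_eq_abs,
      sq_abs] at hm'
    have h2 := mul_le_mul_of_nonneg_left hc' hα.le
    refine le_of_mul_le_mul_left ?_ ht
    nlinarith
  have hlim : α * (p - q) ≤ inner ℝ (wplus - w) (z - wplus) := by
    by_contra! hlt
    set C := ‖z - wplus‖ ^ 2 / 2 with hC
    have hC0 : 0 ≤ C := by positivity
    obtain ⟨δ, hδ⟩ : ∃ δ, δ = α * (p - q) - inner ℝ (wplus - w) (z - wplus) := ⟨_, rfl⟩
    have hδ0 : 0 < δ := by linarith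
    have hs : 0 < δ + C := by linarith
    have h := key (δ / (δ + C)) (by positivity) (by rw [div_le_one hs]; linarith)
    have h3 : δ ≤ δ / (δ + C) * C := by linarith
    rw [div_mul_eq_mul_div, le_div_iff₀ hs] at h3
    nlinarith
  have hexp : ‖w - z‖ ^ 2 = ‖wplus - w‖ ^ 2 + 2 * inner ℝ (wplus - w) (z - wplus)
      + ‖wplus - z‖ ^ 2 := by
    rw [norm_sub_rev w z, norm_sub_rev wplus z, ← norm_add_sq_real]
    congr 2
    abel
  have hn : 0 ≤ ‖wplus - w‖ ^ 2 := by positivity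
  rw [hp, hq, ← EReal.coe_sub, ← EReal.coe_mul, ← EReal.coe_sub, ← EReal.coe_sub,
    EReal.coe_le_coe_iff, EReal.coe_le_coe_iff]
  constructor <;> nlinarith
end

section
/- Let $U$ be a finite-dimensional real inner product space, let $C \subseteq U$ be a nonempty closed convex set, and let $g : U \to \mathbb{R}$ be convex and Lipschitz continuous with constant $L$ on $C$. Let $f = g + \mathbb{I}_C$ (so $f(v) = g(v)$ for $v \in C$, $+\infty$ otherwise). Then for every $\alpha > 0$ and $w \in C$, the minimizer $w^+$ of $v \mapsto \alpha f(v) + \tfrac{1}{2}\|v - w\|^2$ satisfies $\|w^+ - w\| \le \alpha L$. -/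
open NNReal

/-- Displacement bound for a proximal step: if `f = g + I_C` with `g` convex and
`L`-Lipschitz on the nonempty closed convex set `C`, `w ∈ C`, and `wplus` minimizes
`v ↦ α f v + ‖v - w‖²/2` (equivalently, minimizes `v ↦ α g v + ‖v - w‖²/2` over `C`),
then `‖wplus - w‖ ≤ α L`. -/
theorem prox_step_displacement_bound
    {U : Type*} [NormedAddCommGroup U] [InnerProductSpace ℝ U] [FiniteDimensional ℝ U]
    (C : Set U) (hCne : C.Nonempty) (hCclosed : IsClosed C) (hCconv : Convex ℝ C)
    (g : U → ℝ) (hgconv : ConvexOn ℝ C g) (L : ℝ≥0) (hLip : LipschitzOnWith L g C)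
    (α : ℝ) (hα : 0 < α) (w : U) (hw : w ∈ C) (wplus : U) (hwplus : wplus ∈ C)
    (hmin : ∀ v ∈ C, α * g wplus + ‖wplus - w‖ ^ 2 / 2 ≤ α * g v + ‖v - w‖ ^ 2 / 2) :
    ‖wplus - w‖ ≤ α * (L : ℝ) := by
  by_contra hcon
  push Not at hcon
  have hL : 0 ≤ α * (L : ℝ) := by positivity
  set d := ‖wplus - w‖ with hd
  have hdpos : 0 < d := lt_of_le_of_lt hL hcon
  obtain ⟨t, ht⟩ : ∃ t : ℝ, t = (d - α * L) / d := ⟨_, rfl⟩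
  have htd : t * d = d - α * L := by rw [ht]; field_simp
  have ht0 : 0 < t := by rw [ht]; exact div_pos (by linarith) hdpos
  have ht1 : t ≤ 1 := by rw [ht, div_le_one hdpos]; linarith
  have hvC : (1 - t) • wplus + t • w ∈ C :=
    hCconv hwplus hw (by linarith) ht0.le (by ring)
  have h1 : ‖(1 - t) • wplus + t • w - w‖ = (1 - t) * d := by
    have : (1 - t) • wplus + t • w - w = (1 - t) • (wplus - w) := by module
    rw [this, norm_smul, Real.norm_of_nonneg (by linarith)]
  have h2 : g ((1 - t) • wplus + t • w) - g wplus ≤ L * (t * d) := by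
    have h := hLip.dist_le_mul _ hvC _ hwplus
    have e : (1 - t) • wplus + t • w - wplus = (-t) • (wplus - w) := by module
    rw [dist_eq_norm, dist_eq_norm, e, norm_smul, norm_neg, Real.norm_of_nonneg ht0.le] at h
    exact (le_abs_self _).trans h
  have h3 := hmin _ hvC
  rw [h1] at h3
  have h4 := mul_le_mul_of_nonneg_left h2 hα.le
  have h5 : 0 < (t * d) * (d - α * L) := mul_pos (mul_pos ht0 hdpos) (by linarith)
  have h6 : (1 - t) * d = α * L := by linarith
  rw [h6] at h3
  rw [htd] at h4 h5
  nlinarith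
end
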